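/- L^p error bound: let n ≥ 2, let 0 < r₁ < … < r_n, set h := max_{1≤j≤n−1}(r_{j+1} − r_j), let f ∈ Λ₀, set α := f(0) and ν_j := f(r_j) for 1 ≤ j ≤ n, and let σ be either the interpolant σ^A (with σ(r_j) = ν_j for all j and σ(0) = α) or σ^B (non-singular, with σ(r_j) = ν_j for all j). Then for every p ∈ [2,∞] and l ∈ {0,1}: ‖f^{(l)} − σ^{(l)}‖_{L^p[r₁,r_n]} ≤ (1/(2^{1−l}·√r₁))·h^{3/2 + 1/p − l}·‖f‖₀ (with the convention 1/∞ = 0). -/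

import Mathlib

open MeasureTheory Set Filter

noncomputable section

/-- The radial Beppo Levi energy space `Λ₀`: functions `f : (0,∞) → ℂ` of class `C¹`
whose derivative `f′` is locally absolutely continuous on compact subintervals of `(0,∞)`
(encoded by the fundamental theorem of calculus with an integrable density `f″`),
and whose radial Beppo Levi energy `∫₀^∞ ( r·|f″(r)|² + (1/r)·|f′(r)|² ) dr` is finite. -/
structure Lambda0 where
  f : ℝ → ℂ
  f' : ℝ → ℂ
  f'' : ℝ → ℂ
  hasDeriv : ∀ r ∈ Set.Ioi (0:ℝ), HasDerivAt f (f' r) r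
  contDeriv : ContinuousOn f' (Set.Ioi 0)
  locAC : ∀ a b : ℝ, 0 < a → a ≤ b →
    MeasureTheory.IntegrableOn f'' (Set.Icc a b) ∧
      ∀ x ∈ Set.Icc a b, f' x = f' a + ∫ t in a..x, f'' t
  energyFin : MeasureTheory.IntegrableOn
    (fun r : ℝ => r * ‖f'' r‖ ^ 2 + (1 / r) * ‖f' r‖ ^ 2) (Set.Ioi 0)

/-- The squared radial Beppo Levi energy `‖·‖₀²` of a function with first derivative `g'`
and second derivative `g''`. -/
def energySq (g' g'' : ℝ → ℂ) : ℝ :=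
  ∫ r in Set.Ioi (0:ℝ), (r * ‖g'' r‖ ^ 2 + (1 / r) * ‖g' r‖ ^ 2)

/-- The seminorm `‖f‖₀`. -/
def Lambda0.seminorm0 (F : Lambda0) : ℝ :=
  Real.sqrt (energySq F.f' F.f'')

/-- The semi-inner product `⟨f,g⟩₀`. -/
def innerBL (F G : Lambda0) : ℂ :=
  ∫ r in Set.Ioi (0:ℝ),
    ((r : ℂ) * F.f'' r * (starRingEnd ℂ) (G.f'' r) +
      (1 / (r : ℂ)) * F.f' r * (starRingEnd ℂ) (G.f' r))

/-- A Beppo Levi `L₀`-spline on the positive knots `r 1 < r 2 < … < r n`: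
piecewise of the form `a·x² + b·x²·ln x + c + d·ln x` between consecutive knots,
of the form `a·x² + b·x²·ln x + c` on `(0, r 1)`, of the form `c + d·ln x` on `(r n, ∞)`,
`C²` throughout `(0,∞)`, and continuously extended at `0`. -/
structure IsBLSpline (n : ℕ) (r : ℕ → ℝ) (η : ℝ → ℂ) : Prop where
  pieces : ∀ j : ℕ, 1 ≤ j → j + 1 ≤ n → ∃ a b c d : ℂ,
    ∀ x ∈ Set.Ioo (r j) (r (j + 1)),
      η x = a * (x : ℂ) ^ 2 + b * (x : ℂ) ^ 2 * (Real.log x : ℂ) + c + d * (Real.log x : ℂ)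
  left : ∃ a b c : ℂ, ∀ x ∈ Set.Ioo (0 : ℝ) (r 1),
      η x = a * (x : ℂ) ^ 2 + b * (x : ℂ) ^ 2 * (Real.log x : ℂ) + c
  right : ∃ c d : ℂ, ∀ x ∈ Set.Ioi (r n), η x = c + d * (Real.log x : ℂ)
  smooth : ContDiffOn ℝ 2 η (Set.Ioi 0)
  cont0 : ContinuousWithinAt η (Set.Ici 0) 0

/-- A Beppo Levi `L₀`-spline is non-singular if on `(0, r₁)` it has the form `a·x² + c`. -/
def NonSingularBLS (r1 : ℝ) (η : ℝ → ℂ) : Prop :=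
  ∃ a c : ℂ, ∀ x ∈ Set.Ioo (0 : ℝ) r1, η x = a * (x : ℂ) ^ 2 + c

/-- Rabut's kernel `K`. -/
def Kfun (r t : ℝ) : ℝ :=
  if r ≤ t then 0 else (1 / 4) * (t ^ 2 - r ^ 2 + (r ^ 2 + t ^ 2) * Real.log (r / t))

/-- The limiting kernel `H_{0,∞}` (with left endpoint knot `r1`). -/
def Hfun (r1 r t : ℝ) : ℝ :=
  Kfun r t - Kfun r r1 - Kfun r1 t + (1 / 4) * (r ^ 2 - r1 ^ 2) * Real.log (t / r1)

/-- The basis function `φ₀`. -/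
def phi0 (r : ℝ) : ℝ :=
  if r ≤ 1 then r ^ 2 - r ^ 2 * Real.log r else 1 + Real.log r

/-- Johnson's compactly supported profile `η₂`. -/
def eta2 (x : ℝ) : ℂ :=
  (((4 / 3 : ℝ) * (Real.log 2 - phi0 x + phi0 (x / 2)) : ℝ) : ℂ)

/-- The non-singular compactly supported profile `β`. -/
def betaFn (x : ℝ) : ℂ :=
  (((1 / 5 : ℝ) * (27 * Real.log 3 - 32 * Real.log 2 + 5 * phi0 x
      - 32 * phi0 (x / 2) + 27 * phi0 (x / 3)) : ℝ) : ℂ)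

/-- `Ker L₀ = span{r², r² ln r, 1, ln r}`, as functions on `(0,∞)`. -/
def KerL0 : Set (ℝ → ℂ) :=
  {η | ∃ a b c d : ℂ, ∀ x : ℝ, 0 < x →
    η x = a * (x : ℂ) ^ 2 + b * (x : ℂ) ^ 2 * (Real.log x : ℂ) + c + d * (Real.log x : ℂ)}

/-- `α(h) = inf_{η ∈ Ker L₀} sup_{t ∈ [0,1]} |t^μ − η(1+th)|`. -/
def alphaFn (μ h : ℝ) : ℝ :=
  sInf {v : ℝ | ∃ η ∈ KerL0,
    v = sSup ((fun t : ℝ => ‖((t ^ μ : ℝ) : ℂ) - η (1 + t * h)‖) '' Set.Icc (0 : ℝ) 1)}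

namespace Lambda0

/-- energy density -/
def dens (G : Lambda0) (r : ℝ) : ℝ := r * ‖G.f'' r‖ ^ 2 + (1 / r) * ‖G.f' r‖ ^ 2

lemma dens_nonneg (G : Lambda0) {r : ℝ} (hr : 0 < r) : 0 ≤ G.dens r := by
  unfold dens; positivity

lemma dens_int (G : Lambda0) : IntegrableOn G.dens (Ioi 0) := G.energyFin

lemma intervalIntegrable_f'' (G : Lambda0) {a b : ℝ} (ha : 0 < a) (hab : a ≤ b) :
    IntervalIntegrable G.f'' volume a b := by
  rw [intervalIntegrable_iff_integrableOn_Icc_of_le hab]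
  exact (G.locAC a b ha hab).1

lemma intervalIntegrable_f' (G : Lambda0) {a b : ℝ} (ha : 0 < a) (hab : a ≤ b) :
    IntervalIntegrable G.f' volume a b := by
  apply ContinuousOn.intervalIntegrable
  apply G.contDeriv.mono
  rw [uIcc_of_le hab]
  intro x hx
  exact lt_of_lt_of_le ha hx.1

lemma intervalIntegrable_dens (G : Lambda0) {a b : ℝ} (ha : 0 ≤ a) (hab : a ≤ b) :
    IntervalIntegrable G.dens volume a b := by
  rw [intervalIntegrable_iff_integrableOn_Ioc_of_le hab]
  exact G.dens_int.mono_set (fun x hx => lt_of_le_of_lt ha hx.1)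

lemma f_sub (G : Lambda0) {a b : ℝ} (ha : 0 < a) (hab : a ≤ b) :
    G.f b - G.f a = ∫ t in a..b, G.f' t := by
  symm
  apply intervalIntegral.integral_eq_sub_of_hasDerivAt _ (G.intervalIntegrable_f' ha hab)
  rw [uIcc_of_le hab]
  intro x hx
  exact G.hasDeriv x (lt_of_lt_of_le ha hx.1)

lemma f'_sub (G : Lambda0) {a b : ℝ} (ha : 0 < a) (hab : a ≤ b) :
    G.f' b - G.f' a = ∫ t in a..b, G.f'' t := by
  rw [(G.locAC a b ha hab).2 b ⟨hab, le_rfl⟩]; ring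

lemma aesm_f'' (G : Lambda0) : AEStronglyMeasurable G.f'' (volume.restrict (Ioi 0)) := by
  have h : LocallyIntegrableOn G.f'' (Ioi (0:ℝ)) := by
    rw [locallyIntegrableOn_iff (by exact isOpen_Ioi.isLocallyClosed)]
    intro k hk hc
    rcases k.eq_empty_or_nonempty with rfl | hne
    · simp
    obtain ⟨m, hm, hm'⟩ := hc.exists_isLeast hne
    obtain ⟨M, hM, hM'⟩ := hc.exists_isGreatest hne
    exact (G.locAC m M (hk hm) (hm' hM)).1.mono_set (fun x hx => ⟨hm' hx, hM' hx⟩)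
  exact h.aestronglyMeasurable

lemma aesm_f' (G : Lambda0) : AEStronglyMeasurable G.f' (volume.restrict (Ioi 0)) :=
  G.contDeriv.aestronglyMeasurable measurableSet_Ioi

/-- a.e. second derivative -/
lemma ae_hasDerivAt (G : Lambda0) {a b : ℝ} (ha : 0 < a) (hab : a ≤ b) :
    ∀ᵐ x, x ∈ Ioo a b → HasDerivAt G.f' (G.f'' x) x := by
  have := (G.intervalIntegrable_f'' ha hab).ae_hasDerivAt_integral
  filter_upwards [this] with x hx hxab
  rw [uIcc_of_le hab] at hx
  have h1 := (hx ⟨hxab.1.le, hxab.2.le⟩ a ⟨le_rfl, hab⟩).const_add (G.f' a)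
  apply h1.congr_of_eventuallyEq
  filter_upwards [Icc_mem_nhds hxab.1 hxab.2] with y hy
  exact (G.locAC a b ha hab).2 y hy

/-- cross density -/
def cross (G S : Lambda0) (x : ℝ) : ℂ :=
  (x : ℂ) * G.f'' x * (starRingEnd ℂ) (S.f'' x) + G.f' x * (starRingEnd ℂ) (S.f' x) / (x : ℂ)

lemma norm_cross_le (G S : Lambda0) {x : ℝ} (hx : 0 < x) :
    ‖G.cross S x‖ ≤ G.dens x + S.dens x := by
  unfold cross dens
  refine (norm_add_le _ _).trans ?_
  simp only [norm_mul, norm_div, RCLike.norm_conj, Complex.norm_real, Real.norm_eq_abs, abs_of_pos hx]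
  have h1 : ‖G.f'' x‖ * ‖S.f'' x‖ ≤ ‖G.f'' x‖ ^ 2 + ‖S.f'' x‖ ^ 2 := by
    nlinarith [sq_nonneg (‖G.f'' x‖ - ‖S.f'' x‖), sq_nonneg (‖G.f'' x‖), sq_nonneg (‖S.f'' x‖)]
  have h2 : ‖G.f' x‖ * ‖S.f' x‖ ≤ ‖G.f' x‖ ^ 2 + ‖S.f' x‖ ^ 2 := by
    nlinarith [sq_nonneg (‖G.f' x‖ - ‖S.f' x‖), sq_nonneg (‖G.f' x‖), sq_nonneg (‖S.f' x‖)]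
  have h3 := mul_le_mul_of_nonneg_left h1 hx.le
  have h4 := mul_le_mul_of_nonneg_left h2 (one_div_pos.2 hx).le
  have h5 : ‖G.f' x‖ * ‖S.f' x‖ / x = 1 / x * (‖G.f' x‖ * ‖S.f' x‖) := by ring
  rw [h5]
  linarith

lemma cross_int (G S : Lambda0) : IntegrableOn (G.cross S) (Ioi 0) := by
  apply Integrable.mono' (G.dens_int.add S.dens_int)
  · unfold cross
    have hx : AEStronglyMeasurable (fun x : ℝ => (x : ℂ)) (volume.restrict (Ioi 0)) :=
      Complex.continuous_ofReal.aestronglyMeasurable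
    have hc : ∀ u : ℝ → ℂ, AEStronglyMeasurable u (volume.restrict (Ioi 0)) →
        AEStronglyMeasurable (fun x => (starRingEnd ℂ) (u x)) (volume.restrict (Ioi 0)) :=
      fun u hu => Complex.continuous_conj.comp_aestronglyMeasurable hu
    have hi : AEStronglyMeasurable (fun x : ℝ => (x : ℂ)⁻¹) (volume.restrict (Ioi 0)) :=
      (by fun_prop : Measurable (fun x : ℝ => (x : ℂ)⁻¹)).aestronglyMeasurable
    exact ((hx.mul G.aesm_f'').mul (hc _ S.aesm_f'')).add
      ((G.aesm_f'.mul (hc _ S.aesm_f')).mul hi)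
  · filter_upwards [ae_restrict_mem measurableSet_Ioi] with x hx
    exact G.norm_cross_le S hx

/-- difference -/
def sub (F S : Lambda0) : Lambda0 where
  f := fun x => F.f x - S.f x
  f' := fun x => F.f' x - S.f' x
  f'' := fun x => F.f'' x - S.f'' x
  hasDeriv := fun r hr => (F.hasDeriv r hr).sub (S.hasDeriv r hr)
  contDeriv := F.contDeriv.sub S.contDeriv
  locAC := by
    intro a b ha hab
    refine ⟨(F.locAC a b ha hab).1.sub (S.locAC a b ha hab).1, ?_⟩
    intro x hx
    rw [(F.locAC a b ha hab).2 x hx, (S.locAC a b ha hab).2 x hx,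
      intervalIntegral.integral_sub (F.intervalIntegrable_f'' ha hx.1)
        (S.intervalIntegrable_f'' ha hx.1)]
    ring
  energyFin := by
    apply Integrable.mono' ((F.dens_int.add S.dens_int).const_mul 2)
    · have h1 := (F.aesm_f''.sub S.aesm_f'').norm.pow 2
      have h2 := (F.aesm_f'.sub S.aesm_f').norm.pow 2
      have hx : AEStronglyMeasurable (fun x : ℝ => x) (volume.restrict (Ioi 0)) :=
        continuous_id.aestronglyMeasurable
      have hi : AEStronglyMeasurable (fun x : ℝ => 1 / x) (volume.restrict (Ioi 0)) :=
        (by fun_prop : Measurable (fun x : ℝ => 1 / x)).aestronglyMeasurable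
      exact (hx.mul h1).add (hi.mul h2)
    · filter_upwards [ae_restrict_mem measurableSet_Ioi] with x hx
      have hx : 0 < x := hx
      rw [Real.norm_of_nonneg (by positivity)]
      have key : ∀ u v : ℂ, ‖u - v‖ ^ 2 ≤ 2 * (‖u‖ ^ 2 + ‖v‖ ^ 2) := by
        intro u v
        have := norm_sub_le u v
        nlinarith [sq_nonneg (‖u‖ - ‖v‖), norm_nonneg (u - v), norm_nonneg u, norm_nonneg v]
      have h1 := mul_le_mul_of_nonneg_left (key (F.f'' x) (S.f'' x)) hx.le
      have h2 := mul_le_mul_of_nonneg_left (key (F.f' x) (S.f' x)) (one_div_pos.2 hx).le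
      simp only [Pi.add_apply, dens]
      linarith

lemma dens_expand (F S : Lambda0) (x : ℝ) :
    F.dens x = S.dens x + (F.sub S).dens x + 2 * ((F.sub S).cross S x).re := by
  have key : ∀ u v : ℂ, ‖u‖ ^ 2 = ‖v‖ ^ 2 + ‖u - v‖ ^ 2 + 2 * ((u - v) * (starRingEnd ℂ) v).re := by
    intro u v
    simp only [← Complex.normSq_eq_norm_sq, Complex.normSq_apply, Complex.mul_re, Complex.sub_re,
      Complex.sub_im, Complex.conj_re, Complex.conj_im]
    ring
  have h3 : ((F.sub S).cross S x).re =
      x * ((F.f'' x - S.f'' x) * (starRingEnd ℂ) (S.f'' x)).re +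
      (1 / x) * ((F.f' x - S.f' x) * (starRingEnd ℂ) (S.f' x)).re := by
    unfold cross sub
    rw [Complex.add_re, mul_assoc, Complex.re_ofReal_mul, Complex.div_ofReal_re]
    ring
  rw [h3]
  unfold dens
  rw [key (F.f'' x) (S.f'' x), key (F.f' x) (S.f' x)]
  simp only [sub]
  ring

lemma energy_le (F S : Lambda0) (horth : ∫ x in Ioi (0:ℝ), (F.sub S).cross S x = 0) :
    ∫ x in Ioi (0:ℝ), (F.sub S).dens x ≤ ∫ x in Ioi (0:ℝ), F.dens x := by
  have hc := (F.sub S).cross_int S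
  have h1 : ∫ x in Ioi (0:ℝ), F.dens x = ∫ x in Ioi (0:ℝ),
      (S.dens x + (F.sub S).dens x + 2 * ((F.sub S).cross S x).re) :=
    setIntegral_congr_fun measurableSet_Ioi (fun x _ => F.dens_expand S x)
  have hre : IntegrableOn (fun x => 2 * ((F.sub S).cross S x).re) (Ioi 0) := hc.re.const_mul 2
  have h2 : ∫ x in Ioi (0:ℝ), 2 * ((F.sub S).cross S x).re = 0 := by
    rw [integral_const_mul]
    have := integral_re hc
    simp only [RCLike.re_eq_complex_re] at this
    rw [this, horth]; simp
  have h3 : 0 ≤ ∫ x in Ioi (0:ℝ), S.dens x :=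
    setIntegral_nonneg measurableSet_Ioi (fun x hx => S.dens_nonneg hx)
  have hsum : IntegrableOn (fun x => S.dens x + (F.sub S).dens x) (Ioi 0) :=
    S.dens_int.add (F.sub S).dens_int
  rw [integral_add hsum hre,
    integral_add S.dens_int (F.sub S).dens_int, h2] at h1
  linarith

end Lambda0

namespace Lambda0

/-- Cauchy-Schwarz on an interval. -/
lemma cs_interval {u : ℝ → ℝ} {a b : ℝ} (hab : a < b) (h1 : IntervalIntegrable u volume a b)
    (h2 : IntervalIntegrable (fun x => u x ^ 2) volume a b) :
    (∫ x in a..b, u x) ^ 2 ≤ (b - a) * ∫ x in a..b, u x ^ 2 := by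
  set B := ∫ x in a..b, u x with hB
  set A := ∫ x in a..b, u x ^ 2 with hA
  set m := B / (b - a) with hm
  have h0 : 0 ≤ ∫ x in a..b, (u x - m) ^ 2 :=
    intervalIntegral.integral_nonneg hab.le (fun x _ => sq_nonneg _)
  have h3 : ∫ x in a..b, (u x - m) ^ 2 = A - 2 * m * B + m ^ 2 * (b - a) := by
    have : ∀ x, (u x - m) ^ 2 = u x ^ 2 - 2 * m * u x + m ^ 2 := fun x => by ring
    simp_rw [this]
    rw [intervalIntegral.integral_add (h2.sub (h1.const_mul _)) (by simp),
      intervalIntegral.integral_sub h2 (h1.const_mul _), intervalIntegral.integral_const_mul]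
    simp; ring
  rw [h3] at h0
  have hba : 0 < b - a := sub_pos.2 hab
  have h4 : m * (b - a) = B := by rw [hm]; field_simp
  have h5 : 0 ≤ (b - a) * (A - 2 * m * B + m ^ 2 * (b - a)) := mul_nonneg hba.le h0
  have h6 : (b - a) * (A - 2 * m * B + m ^ 2 * (b - a)) = (b - a) * A - B ^ 2 := by
    rw [← h4]; ring
  linarith

lemma f''_sq_le (G : Lambda0) {a x : ℝ} (ha : 0 < a) (hx : a ≤ x) :
    ‖G.f'' x‖ ^ 2 ≤ 1 / a * G.dens x := by
  have hx0 : 0 < x := lt_of_lt_of_le ha hx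
  have h1 : a * ‖G.f'' x‖ ^ 2 ≤ G.dens x := by
    unfold dens
    have : 0 ≤ 1 / x * ‖G.f' x‖ ^ 2 := by positivity
    have := mul_le_mul_of_nonneg_right hx (sq_nonneg ‖G.f'' x‖)
    linarith
  rw [one_div, ← div_eq_inv_mul, le_div_iff₀ ha]; linarith

lemma intervalIntegrable_sq (G : Lambda0) {a b : ℝ} (ha : 0 < a) (hab : a ≤ b) :
    IntervalIntegrable (fun x => ‖G.f'' x‖ ^ 2) volume a b := by
  rw [intervalIntegrable_iff_integrableOn_Icc_of_le hab]
  have hd : IntegrableOn (fun x => 1 / a * G.dens x) (Icc a b) :=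
    (G.dens_int.mono_set (fun x hx => lt_of_lt_of_le ha hx.1)).const_mul _
  apply Integrable.mono' hd
  · exact (G.locAC a b ha hab).1.aestronglyMeasurable.norm.pow 2
  · filter_upwards [ae_restrict_mem measurableSet_Icc] with x hx
    rw [Real.norm_of_nonneg (by positivity)]
    exact G.f''_sq_le ha hx.1

lemma B_sq_le (G : Lambda0) {a b c : ℝ} (hc : 0 < c) (hca : c ≤ a) (hab : a < b) :
    (∫ x in a..b, ‖G.f'' x‖) ^ 2 ≤ (b - a) / c * ∫ x in a..b, G.dens x := by
  have ha := lt_of_lt_of_le hc hca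
  refine (cs_interval hab (G.intervalIntegrable_f'' ha hab.le).norm
    (G.intervalIntegrable_sq ha hab.le)).trans ?_
  have : ∫ x in a..b, ‖G.f'' x‖ ^ 2 ≤ ∫ x in a..b, 1 / c * G.dens x := by
    apply intervalIntegral.integral_mono_on hab.le (G.intervalIntegrable_sq ha hab.le)
      ((G.intervalIntegrable_dens ha.le hab.le).const_mul _)
    intro x hx
    exact G.f''_sq_le hc (hca.trans hx.1)
  rw [intervalIntegral.integral_const_mul] at this
  calc _ ≤ (b - a) * (1 / c * ∫ x in a..b, G.dens x) :=
        mul_le_mul_of_nonneg_left this (sub_pos.2 hab).le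
    _ = _ := by ring

lemma f'_osc (G : Lambda0) {a b x y : ℝ} (ha : 0 < a) (hx : x ∈ Icc a b) (hy : y ∈ Icc a b) :
    ‖G.f' x - G.f' y‖ ≤ ∫ t in a..b, ‖G.f'' t‖ := by
  have main : ∀ x y, x ∈ Icc a b → y ∈ Icc a b → x ≤ y →
      ‖G.f' y - G.f' x‖ ≤ ∫ t in a..b, ‖G.f'' t‖ := by
    intro x y hx hy hxy
    rw [G.f'_sub (lt_of_lt_of_le ha hx.1) hxy]
    refine (intervalIntegral.norm_integral_le_integral_norm hxy).trans ?_
    apply intervalIntegral.integral_mono_interval hx.1 hxy hy.2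
    · exact Eventually.of_forall (fun t => norm_nonneg _)
    · exact (G.intervalIntegrable_f'' ha (hx.1.trans hx.2)).norm
  rcases le_total x y with h | h
  · rw [norm_sub_rev]; exact main x y hx hy h
  · exact main y x hy hx h

lemma f'_le_B (G : Lambda0) {a b x : ℝ} (ha : 0 < a) (hab : a < b) (hx : x ∈ Icc a b)
    (hGa : G.f a = 0) (hGb : G.f b = 0) :
    ‖G.f' x‖ ≤ ∫ t in a..b, ‖G.f'' t‖ := by
  have h0 : ∫ t in a..b, G.f' t = 0 := by rw [← G.f_sub ha hab.le, hGa, hGb, sub_zero]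
  have h1 : ∫ t in a..b, (G.f' x - G.f' t) = ((b - a : ℝ) : ℂ) * G.f' x := by
    rw [intervalIntegral.integral_sub (by simp) (G.intervalIntegrable_f' ha hab.le), h0]
    simp
  have h2 := intervalIntegral.norm_integral_le_of_norm_le_const
    (f := fun t => G.f' x - G.f' t) (a := a) (b := b) (C := ∫ t in a..b, ‖G.f'' t‖) (by
      intro t ht
      rw [uIoc_of_le hab.le] at ht
      exact G.f'_osc ha hx ⟨ht.1.le, ht.2⟩)
  have hba : 0 < b - a := sub_pos.2 hab
  rw [h1, norm_mul, Complex.norm_real, Real.norm_of_nonneg hba.le, abs_of_pos hba, mul_comm] at h2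
  exact le_of_mul_le_mul_right h2 hba

lemma f_le_B (G : Lambda0) {a b x : ℝ} (ha : 0 < a) (hab : a < b) (hx : x ∈ Icc a b)
    (hGa : G.f a = 0) (hGb : G.f b = 0) :
    ‖G.f x‖ ≤ (b - a) / 2 * ∫ t in a..b, ‖G.f'' t‖ := by
  set B := ∫ t in a..b, ‖G.f'' t‖ with hB
  have h1 : ‖G.f x‖ ≤ B * (x - a) := by
    have := intervalIntegral.norm_integral_le_of_norm_le_const
      (f := G.f') (a := a) (b := x) (C := B) (by
      intro t ht
      rw [uIoc_of_le hx.1] at ht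
      exact G.f'_le_B ha hab ⟨ht.1.le, ht.2.trans hx.2⟩ hGa hGb)
    rwa [← G.f_sub ha hx.1, hGa, sub_zero, abs_of_nonneg (sub_nonneg.2 hx.1)] at this
  have h2 : ‖G.f x‖ ≤ B * (b - x) := by
    have := intervalIntegral.norm_integral_le_of_norm_le_const
      (f := G.f') (a := x) (b := b) (C := B) (by
      intro t ht
      rw [uIoc_of_le hx.2] at ht
      exact G.f'_le_B ha hab ⟨hx.1.trans ht.1.le, ht.2⟩ hGa hGb)
    rwa [← G.f_sub (lt_of_lt_of_le ha hx.1) hx.2, hGb, zero_sub, norm_neg,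
      abs_of_nonneg (sub_nonneg.2 hx.2)] at this
  linarith

end Lambda0

/-- knots are monotone -/
lemma knots_le {n : ℕ} {r : ℕ → ℝ} (hmono : ∀ j, 1 ≤ j → j < n → r j < r (j + 1)) :
    ∀ k, 1 ≤ k → k ≤ n → r 1 ≤ r k := by
  intro k hk
  induction k, hk using Nat.le_induction with
  | base => intro _; exact le_rfl
  | succ k hk ih => intro h; exact (ih (by omega)).trans (hmono k hk (by omega)).le

lemma knots_find {r : ℕ → ℝ} {x : ℝ} (hx1 : r 1 ≤ x) :
    ∀ k, 2 ≤ k → x ≤ r k → ∃ j, 1 ≤ j ∧ j < k ∧ x ∈ Icc (r j) (r (j + 1)) := by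
  intro k hk
  induction k, hk using Nat.le_induction with
  | base => intro h; exact ⟨1, le_rfl, by norm_num, hx1, h⟩
  | succ k hk ih =>
    intro h
    rcases le_total x (r k) with h' | h'
    · obtain ⟨j, h1, h2, h3⟩ := ih h'
      exact ⟨j, h1, by omega, h3⟩
    · exact ⟨k, by omega, by omega, h', h⟩

lemma Lp_bound (n : ℕ) (hn : 2 ≤ n) (r : ℕ → ℝ) (hpos : 0 < r 1)
    (hmono : ∀ j, 1 ≤ j → j < n → r j < r (j + 1)) (h : ℝ)
    (hh : ∀ j, 1 ≤ j → j < n → r (j + 1) - r j ≤ h)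
    (u : ℝ → ℂ) (e : ℝ → ℝ) (he : IntegrableOn e (Ioi 0)) (he0 : ∀ x, 0 < x → 0 ≤ e x)
    (K N : ℝ) (hK : 0 ≤ K) (hN : 0 ≤ N) (heN : ∫ x in Ioi (0:ℝ), e x ≤ N ^ 2)
    (hu : ∀ j, 1 ≤ j → j < n → ∀ x ∈ Icc (r j) (r (j + 1)),
      ‖u x‖ ^ 2 ≤ K * ∫ t in (r j)..(r (j + 1)), e t)
    (p : ENNReal) (hp : 2 ≤ p) :
    eLpNorm u p (volume.restrict (Icc (r 1) (r n))) ≤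
      ENNReal.ofReal (Real.sqrt K * h ^ (1 / p).toReal * N) := by
  have hrpos : ∀ k, 1 ≤ k → k ≤ n → 0 < r k := fun k h1 h2 =>
    lt_of_lt_of_le hpos (knots_le hmono k h1 h2)
  have hh0 : 0 < h := lt_of_lt_of_le (sub_pos.2 (hmono 1 le_rfl (by omega))) (hh 1 le_rfl (by omega))
  have heI : ∀ a b, 0 < a → a ≤ b → ∫ t in a..b, e t ≤ N ^ 2 := by
    intro a b ha hab
    rw [intervalIntegral.integral_of_le hab]
    refine le_trans ?_ heN
    apply setIntegral_mono_set he
    · filter_upwards [ae_restrict_mem measurableSet_Ioi] with x hx using he0 x hx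
    · exact Eventually.of_forall (fun x hx => lt_trans ha hx.1)
  have heII : ∀ a b, 0 < a → a ≤ b → IntervalIntegrable e volume a b := by
    intro a b ha hab
    rw [intervalIntegrable_iff_integrableOn_Ioc_of_le hab]
    exact he.mono_set (fun x hx => lt_trans ha hx.1)
  have he00 : ∀ a b, 0 < a → a ≤ b → 0 ≤ ∫ t in a..b, e t := by
    intro a b ha hab
    exact intervalIntegral.integral_nonneg hab (fun x hx => he0 x (lt_of_lt_of_le ha hx.1))
  set M := Real.sqrt K * N with hM
  have hM0 : 0 ≤ M := by positivity
  have hM2 : M ^ 2 = K * N ^ 2 := by rw [hM, mul_pow, Real.sq_sqrt hK]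
  have hsup : ∀ j, 1 ≤ j → j < n → ∀ x ∈ Icc (r j) (r (j + 1)), ‖u x‖ ≤ M := by
    intro j h1 h2 x hx
    apply le_of_sq_le_sq _ hM0
    rw [hM2]
    exact (hu j h1 h2 x hx).trans
      (mul_le_mul_of_nonneg_left (heI _ _ (hrpos j h1 h2.le) (hmono j h1 h2).le) hK)
  rcases eq_or_ne p ⊤ with rfl | hpt
  · rw [eLpNorm_exponent_top]
    have : Real.sqrt K * h ^ ((1:ENNReal) / ⊤).toReal * N = M := by simp [hM]
    rw [this]
    apply eLpNormEssSup_le_of_ae_bound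
    filter_upwards [ae_restrict_mem measurableSet_Icc] with x hx
    obtain ⟨j, h1, h2, h3⟩ := knots_find hx.1 n hn hx.2
    exact hsup j h1 h2 x h3
  · set q := p.toReal with hq
    have hq2 : 2 ≤ q := by
      have := (ENNReal.toReal_le_toReal (by simp) hpt).2 hp
      simpa using this
    have hp0 : p ≠ 0 := by rintro rfl; simp at hp
    set c := h * M ^ (q - 2) * K with hc
    have hc0 : 0 ≤ c := by positivity
    have hmain : ∀ k, 1 ≤ k → k ≤ n → ∫⁻ x in Icc (r 1) (r k), ‖u x‖ₑ ^ q ≤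
        ENNReal.ofReal (c * ∫ t in (r 1)..(r k), e t) := by
      intro k hk
      induction k, hk using Nat.le_induction with
      | base => intro _; simp
      | succ k hk ih =>
        intro hkn
        have hk' : r k < r (k + 1) := hmono k hk (by omega)
        have h1k : r 1 ≤ r k := knots_le hmono k hk (by omega)
        have hrk := hrpos k hk (by omega)
        rw [← Icc_union_Icc_eq_Icc h1k hk'.le]
        refine (lintegral_union_le _ _ _).trans ?_
        rw [← intervalIntegral.integral_add_adjacent_intervals (heII _ _ hpos h1k)
          (heII _ _ hrk hk'.le), mul_add, ENNReal.ofReal_add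
          (mul_nonneg hc0 (he00 _ _ hpos h1k)) (mul_nonneg hc0 (he00 _ _ hrk hk'.le))]
        refine add_le_add (ih (by omega)) ?_
        set E := ∫ t in (r k)..(r (k + 1)), e t with hE
        have hE0 : 0 ≤ E := he00 _ _ hrk hk'.le
        have hpt : ∀ x ∈ Icc (r k) (r (k + 1)),
            ‖u x‖ₑ ^ q ≤ ENNReal.ofReal (M ^ (q - 2) * K * E) := by
          intro x hx
          rw [← ofReal_norm, ENNReal.ofReal_rpow_of_nonneg (norm_nonneg _) (by linarith)]
          apply ENNReal.ofReal_le_ofReal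
          have h1 : ‖u x‖ ^ q = ‖u x‖ ^ (q - 2) * ‖u x‖ ^ 2 := by
            rw [← Real.rpow_natCast ‖u x‖ 2,
              ← Real.rpow_add_of_nonneg (norm_nonneg _) (by linarith) (by norm_num)]
            congr 1; norm_num
          rw [h1, mul_assoc]
          exact mul_le_mul (Real.rpow_le_rpow (norm_nonneg _) (hsup k hk (by omega) x hx)
            (by linarith)) (hu k hk (by omega) x hx) (by positivity) (by positivity)
        calc ∫⁻ x in Icc (r k) (r (k + 1)), ‖u x‖ₑ ^ q
            ≤ ∫⁻ x in Icc (r k) (r (k + 1)), ENNReal.ofReal (M ^ (q - 2) * K * E) :=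
              setLIntegral_mono' measurableSet_Icc hpt
          _ = ENNReal.ofReal (M ^ (q - 2) * K * E) * ENNReal.ofReal (r (k + 1) - r k) := by
              rw [setLIntegral_const, Real.volume_Icc]
          _ = ENNReal.ofReal (M ^ (q - 2) * K * E * (r (k + 1) - r k)) := by
              exact (ENNReal.ofReal_mul (by positivity)).symm
          _ ≤ ENNReal.ofReal (c * E) := by
              apply ENNReal.ofReal_le_ofReal
              have := mul_le_mul_of_nonneg_left (hh k hk (by omega))
                (show 0 ≤ M ^ (q - 2) * K * E by positivity)
              rw [hc]; linarith
    have hfin := hmain n (by omega) le_rfl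
    have hle : c * ∫ t in (r 1)..(r n), e t ≤ h * M ^ q := by
      have h1 : c * ∫ t in (r 1)..(r n), e t ≤ c * N ^ 2 :=
        mul_le_mul_of_nonneg_left (heI _ _ hpos (knots_le hmono n (by omega) le_rfl)) hc0
      have h2 : M ^ q = M ^ (q - 2) * M ^ 2 := by
        rw [← Real.rpow_natCast M 2,
              ← Real.rpow_add_of_nonneg hM0 (by linarith) (by norm_num)]
        congr 1; norm_num
      rw [h2, hM2]
      refine h1.trans (le_of_eq ?_)
      rw [hc]; ring
    rw [eLpNorm_eq_lintegral_rpow_enorm_toReal hp0 hpt]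
    calc (∫⁻ x in Icc (r 1) (r n), ‖u x‖ₑ ^ q) ^ (1 / q)
        ≤ (ENNReal.ofReal (h * M ^ q)) ^ (1 / q) :=
          ENNReal.rpow_le_rpow (hfin.trans (ENNReal.ofReal_le_ofReal hle)) (by positivity)
      _ = ENNReal.ofReal ((h * M ^ q) ^ (1 / q)) := by
          rw [ENNReal.ofReal_rpow_of_nonneg (by positivity) (by positivity)]
      _ = _ := by
          congr 1
          rw [Real.mul_rpow hh0.le (by positivity), ← Real.rpow_mul hM0]
          have : q * (1 / q) = 1 := by field_simp
          rw [this, Real.rpow_one, hM, ENNReal.toReal_div]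
          simp only [ENNReal.toReal_one, ← hq]
          ring

/-- kernel function -/
def PP (a b c d : ℂ) (x : ℝ) : ℂ :=
  a * (x : ℂ) ^ 2 + b * (x : ℂ) ^ 2 * (Real.log x : ℂ) + c + d * (Real.log x : ℂ)

/-- its first derivative -/
def PP1 (a b d : ℂ) (x : ℝ) : ℂ :=
  2 * a * (x : ℂ) + b * (2 * (x : ℂ) * (Real.log x : ℂ) + (x : ℂ)) + d / (x : ℂ)

/-- its second derivative -/
def PP2 (a b d : ℂ) (x : ℝ) : ℂ :=
  2 * a + b * (2 * (Real.log x : ℂ) + 3) - d / (x : ℂ) ^ 2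

/-- derivative of `x ↦ x * PP2 x` -/
def PP3 (a b d : ℂ) (x : ℝ) : ℂ :=
  2 * a + b * (2 * (Real.log x : ℂ) + 5) + d / (x : ℂ) ^ 2

lemma hd_ofReal (x : ℝ) : HasDerivAt (fun x : ℝ => (x : ℂ)) 1 x := by
  simpa using (hasDerivAt_id x).ofReal_comp

lemma hd_log {x : ℝ} (hx : 0 < x) :
    HasDerivAt (fun x : ℝ => (Real.log x : ℂ)) ((x : ℂ)⁻¹) x := by
  simpa using (Real.hasDerivAt_log hx.ne').ofReal_comp

lemma hd_inv {x : ℝ} (hx : 0 < x) :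
    HasDerivAt (fun x : ℝ => ((x : ℂ)⁻¹)) (-((x : ℂ) ^ 2)⁻¹) x := by
  have := (hasDerivAt_inv hx.ne').ofReal_comp
  simpa using this

lemma hd_PP (a b c d : ℂ) {x : ℝ} (hx : 0 < x) : HasDerivAt (PP a b c d) (PP1 a b d x) x := by
  have hx' : (x : ℂ) ≠ 0 := by exact_mod_cast hx.ne'
  have h := (((((hd_ofReal x).pow 2).const_mul a).add
    ((((hd_ofReal x).pow 2).const_mul b).mul (hd_log hx))).add_const c).add
    ((hd_log hx).const_mul d)
  refine h.congr_deriv ?_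
  simp only [PP1, Pi.pow_apply]
  field_simp
  push_cast
  ring

lemma hd_PP1 (a b d : ℂ) {x : ℝ} (hx : 0 < x) : HasDerivAt (PP1 a b d) (PP2 a b d x) x := by
  have hx' : (x : ℂ) ≠ 0 := by exact_mod_cast hx.ne'
  have h := (((hd_ofReal x).const_mul (2 * a)).add
    (((((hd_ofReal x).const_mul 2).mul (hd_log hx)).add (hd_ofReal x)).const_mul b)).add
    ((hd_inv hx).const_mul d)
  refine h.congr_deriv ?_
  simp only [PP2]
  field_simp
  ring

lemma hd_xPP2 (a b d : ℂ) {x : ℝ} (hx : 0 < x) :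
    HasDerivAt (fun x : ℝ => (x : ℂ) * PP2 a b d x) (PP3 a b d x) x := by
  have hx' : (x : ℂ) ≠ 0 := by exact_mod_cast hx.ne'
  have h := (hd_ofReal x).mul (((((hd_log hx).const_mul 2).add_const 3).const_mul b
    |>.const_add (2 * a)).sub (((hd_inv hx).pow 2).const_mul d))
  have h' := h.congr_of_eventuallyEq (f₁ := fun x : ℝ => (x : ℂ) * PP2 a b d x)
    (Eventually.of_forall fun y => by simp [PP2, div_eq_mul_inv])
  refine h'.congr_deriv ?_
  simp only [PP3, Pi.pow_apply, Pi.sub_apply, show (2 - 1 : ℕ) = 1 from rfl, pow_one]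
  field_simp
  push_cast
  ring

lemma cont_PP2 (a b d : ℂ) : ContinuousOn (PP2 a b d) (Ioi 0) := by
  unfold PP2
  have h0 : ContinuousOn (fun x : ℝ => (x : ℂ)) (Ioi 0) :=
    Complex.continuous_ofReal.continuousOn
  have h1 : ContinuousOn (fun x : ℝ => (Real.log x : ℂ)) (Ioi 0) :=
    fun x hx => (hd_log hx).continuousAt.continuousWithinAt
  refine ((h1.const_mul 2 |>.add continuousOn_const).const_mul b |>.const_add (2 * a)).sub
    (continuousOn_const.div (h0.pow 2) ?_)
  intro x hx
  have : (x : ℂ) ≠ 0 := by exact_mod_cast (ne_of_gt hx)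
  exact pow_ne_zero 2 this

lemma cont_PP3 (a b d : ℂ) : ContinuousOn (PP3 a b d) (Ioi 0) := by
  have h := cont_PP2 a b (-d)
  refine (h.add (continuousOn_const (c := 2 * b))).congr ?_
  intro x _
  simp only [PP2, PP3, Pi.add_apply]
  ring

lemma conj_PP1 (a b d : ℂ) (x : ℝ) : (starRingEnd ℂ) (PP1 a b d x) =
    PP1 ((starRingEnd ℂ) a) ((starRingEnd ℂ) b) ((starRingEnd ℂ) d) x := by
  simp [PP1, Complex.conj_ofNat]

lemma conj_PP2 (a b d : ℂ) (x : ℝ) : (starRingEnd ℂ) (PP2 a b d x) =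
    PP2 ((starRingEnd ℂ) a) ((starRingEnd ℂ) b) ((starRingEnd ℂ) d) x := by
  simp [PP2, Complex.conj_ofNat]

lemma PP_identity (a b d : ℂ) {x : ℝ} (hx : 0 < x) :
    PP3 a b d x - 4 * b = PP1 a b d x / (x : ℂ) := by
  have hx' : (x : ℂ) ≠ 0 := by exact_mod_cast hx.ne'
  simp only [PP1, PP3]
  field_simp
  ring

lemma ac_prim {v : ℝ → ℂ} {a b : ℝ} (hv : IntervalIntegrable v volume a b) :
    AbsolutelyContinuousOnInterval (fun x => ∫ t in a..x, v t) a b := by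
  have h3 := hv.norm.absolutelyContinuousOnInterval_intervalIntegral (c := a) left_mem_uIcc
  rw [absolutelyContinuousOnInterval_iff] at h3 ⊢
  intro ε hε
  obtain ⟨δ, hδ, H⟩ := h3 ε hε
  refine ⟨δ, hδ, fun E hE hs => ?_⟩
  refine lt_of_le_of_lt (Finset.sum_le_sum ?_) (H E hE hs)
  intro i hi
  have hE' := hE.1 i hi
  have hii : ∀ x ∈ uIcc a b, IntervalIntegrable v volume a x := by
    intro x hx
    exact hv.mono_set (uIcc_subset_uIcc left_mem_uIcc hx)
  rw [dist_eq_norm, dist_eq_norm,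
    intervalIntegral.integral_interval_sub_left (hii _ hE'.1) (hii _ hE'.2),
    intervalIntegral.integral_interval_sub_left (hii _ hE'.1).norm (hii _ hE'.2).norm,
    Real.norm_eq_abs]
  exact intervalIntegral.norm_integral_le_abs_integral_norm

lemma ac_of_ftc {u v : ℝ → ℂ} {a b : ℝ} (hab : a ≤ b) (hv : IntervalIntegrable v volume a b)
    (h : ∀ x ∈ Icc a b, u x = u a + ∫ t in a..x, v t) : AbsolutelyContinuousOnInterval u a b := by
  have h1 := ac_prim hv
  have h2 : AbsolutelyContinuousOnInterval (fun _ : ℝ => u a) a b := by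
    apply ContDiffOn.absolutelyContinuousOnInterval
    exact contDiffOn_const
  have h3 := h2.fun_add h1
  rw [absolutelyContinuousOnInterval_iff] at h3 ⊢
  intro ε hε
  obtain ⟨δ, hδ, H⟩ := h3 ε hε
  refine ⟨δ, hδ, fun E hE hs => ?_⟩
  refine lt_of_le_of_lt (le_of_eq ?_) (H E hE hs)
  apply Finset.sum_congr rfl
  intro i hi
  have hE' := hE.1 i hi
  rw [uIcc_of_le hab] at hE'
  rw [h _ hE'.1, h _ hE'.2]

lemma ftc_ac {u v : ℝ → ℂ} {a b : ℝ} (hab : a ≤ b) (hu : AbsolutelyContinuousOnInterval u a b)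
    (hv : IntervalIntegrable v volume a b) (hd : ∀ᵐ x, x ∈ Ioo a b → HasDerivAt u (v x) x) :
    ∫ x in a..b, v x = u b - u a := by
  have h1 := ac_prim hv
  have h2 := hu.fun_sub h1
  obtain ⟨C, hC⟩ := h2.const_of_ae_hasDerivAt_zero (by
    have ha : ∀ᵐ x : ℝ, x ≠ a := by simp [ae_iff, measure_singleton]
    have hb : ∀ᵐ x : ℝ, x ≠ b := by simp [ae_iff, measure_singleton]
    filter_upwards [hd, hv.ae_hasDerivAt_integral, ha, hb] with x hx hx' hxa hxb hxx
    have h3 := hx' hxx a (by simp)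
    rw [uIcc_of_le hab] at hxx
    have h4 := hx ⟨lt_of_le_of_ne hxx.1 (Ne.symm hxa), lt_of_le_of_ne hxx.2 hxb⟩
    exact (h4.sub h3).congr_deriv (sub_self _))
  have e1 := hC a (by simp)
  have e2 := hC b (by simp)
  simp only [intervalIntegral.integral_same, sub_zero] at e1
  rw [← e1] at e2
  rw [← e2]; ring

namespace Lambda0

lemma f'_eq_PP1 (S : Lambda0) {α β : ℝ} (hα : 0 ≤ α) {a b c d : ℂ}
    (hS : ∀ x ∈ Ioo α β, S.f x = PP a b c d x) {x : ℝ} (hx : x ∈ Ioo α β) :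
    S.f' x = PP1 a b d x := by
  have hx0 : 0 < x := lt_of_le_of_lt hα hx.1
  refine (S.hasDeriv x hx0).unique ((hd_PP a b c d hx0).congr_of_eventuallyEq ?_)
  filter_upwards [Ioo_mem_nhds hx.1 hx.2] with y hy using hS y hy

lemma s2_eq_PP2 (S : Lambda0) {s2 : ℝ → ℂ} (hs2 : ∀ x, 0 < x → HasDerivAt S.f' (s2 x) x)
    {α β : ℝ} (hα : 0 ≤ α) {a b c d : ℂ}
    (hS : ∀ x ∈ Ioo α β, S.f x = PP a b c d x) {x : ℝ} (hx : x ∈ Ioo α β) :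
    s2 x = PP2 a b d x := by
  have hx0 : 0 < x := lt_of_le_of_lt hα hx.1
  refine (hs2 x hx0).unique ((hd_PP1 a b d hx0).congr_of_eventuallyEq ?_)
  filter_upwards [Ioo_mem_nhds hx.1 hx.2] with y hy using S.f'_eq_PP1 hα hS hy

lemma s2_eq_PP2' (S : Lambda0) {s2 : ℝ → ℂ} (hs2 : ∀ x, 0 < x → HasDerivAt S.f' (s2 x) x)
    (hs2c : ContinuousOn s2 (Ioi 0))
    {α β : ℝ} (hα : 0 < α) (hαβ : α < β) {a b c d : ℂ}
    (hS : ∀ x ∈ Ioo α β, S.f x = PP a b c d x) {x : ℝ} (hx : x ∈ Icc α β) :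
    s2 x = PP2 a b d x := by
  have hsub : Icc α β ⊆ Ioi 0 := fun y hy => lt_of_lt_of_le hα hy.1
  have h1 : EqOn s2 (PP2 a b d) (Ioo α β) := fun y hy => S.s2_eq_PP2 hs2 hα.le hS hy
  exact h1.of_subset_closure (hs2c.mono hsub) ((cont_PP2 a b d).mono hsub) Ioo_subset_Icc_self
    (by rw [closure_Ioo hαβ.ne]) hx

/-- integration by parts on one piece -/
lemma piece (G S : Lambda0) {s2 : ℝ → ℂ} (hs2 : ∀ x, 0 < x → HasDerivAt S.f' (s2 x) x)
    (hs2c : ContinuousOn s2 (Ioi 0))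
    {α β : ℝ} (hα : 0 < α) (hαβ : α < β) {a b c d : ℂ}
    (hS : ∀ x ∈ Ioo α β, S.f x = PP a b c d x) :
    ∫ x in α..β, G.cross S x =
      (G.f' β * ((β : ℂ) * (starRingEnd ℂ) (s2 β)) - G.f' α * ((α : ℂ) * (starRingEnd ℂ) (s2 α)))
      - 4 * (starRingEnd ℂ) b * (G.f β - G.f α) := by
  set a' := (starRingEnd ℂ) a
  set b' := (starRingEnd ℂ) b
  set d' := (starRingEnd ℂ) d
  set T : ℝ → ℂ := fun x => (x : ℂ) * PP2 a' b' d' x with hT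
  have hsub : Icc α β ⊆ Ioi 0 := fun y hy => lt_of_lt_of_le hα hy.1
  have hP3 : ∀ x, α ≤ x → IntervalIntegrable (PP3 a' b' d') volume α x := by
    intro x hx
    apply ContinuousOn.intervalIntegrable
    rw [uIcc_of_le hx]
    exact (cont_PP3 a' b' d').mono (fun y hy => lt_of_lt_of_le hα hy.1)
  have acT : AbsolutelyContinuousOnInterval T α β := by
    apply ac_of_ftc hαβ.le (hP3 β hαβ.le)
    intro x hx
    rw [intervalIntegral.integral_eq_sub_of_hasDerivAt (f := T) _ (hP3 x hx.1)]
    · ring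
    · rw [uIcc_of_le hx.1]
      intro y hy
      exact hd_xPP2 a' b' d' (lt_of_lt_of_le hα hy.1)
  have acG : AbsolutelyContinuousOnInterval G.f' α β :=
    ac_of_ftc hαβ.le (G.intervalIntegrable_f'' hα hαβ.le) (G.locAC α β hα hαβ.le).2
  have acGf : AbsolutelyContinuousOnInterval G.f α β := by
    apply ac_of_ftc hαβ.le (G.intervalIntegrable_f' hα hαβ.le)
    intro x hx
    rw [← G.f_sub hα hx.1]; ring
  have acΦ : AbsolutelyContinuousOnInterval (fun x => G.f' x * T x - (4 * b') * G.f x) α β :=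
    (acG.fun_smul acT).fun_sub (acGf.const_smul (4 * b'))
  have hint : IntervalIntegrable (G.cross S) volume α β := by
    rw [intervalIntegrable_iff_integrableOn_Icc_of_le hαβ.le]
    exact (G.cross_int S).mono_set hsub
  rw [ftc_ac hαβ.le acΦ hint]
  · have e1 := S.s2_eq_PP2' hs2 hs2c hα hαβ hS (x := α) ⟨le_rfl, hαβ.le⟩
    have e2 := S.s2_eq_PP2' hs2 hs2c hα hαβ hS (x := β) ⟨hαβ.le, le_rfl⟩
    rw [e1, e2, conj_PP2, conj_PP2]
    ring
  · filter_upwards [G.ae_hasDerivAt hα hαβ.le, S.ae_hasDerivAt hα hαβ.le] with x hG hSx hx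
    have hx0 : 0 < x := lt_trans hα hx.1
    have h1 := ((hG hx).mul (hd_xPP2 a' b' d' hx0)).sub ((G.hasDeriv x hx0).const_mul (4 * b'))
    refine h1.congr_deriv ?_
    have e1 : S.f'' x = PP2 a b d x :=
      ((hSx hx).unique (hs2 x hx0)).trans (S.s2_eq_PP2 hs2 hα.le hS hx)
    have e2 := S.f'_eq_PP1 hα.le hS hx
    unfold cross
    rw [e1, e2, conj_PP1, conj_PP2, mul_div_assoc, ← PP_identity _ _ _ hx0]
    ring

/-- logarithmic growth of the first derivative -/
lemma f'_growth (G : Lambda0) : ∃ C : ℝ, 0 ≤ C ∧ ∀ x, 0 < x → ‖G.f' x‖ ≤ C + |Real.log x| := by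
  set E := ∫ x in Ioi (0:ℝ), G.dens x with hE
  have hE0 : 0 ≤ E := setIntegral_nonneg measurableSet_Ioi (fun x hx => G.dens_nonneg hx)
  have key : ∀ a b, 0 < a → a ≤ b → ‖G.f' b - G.f' a‖ ≤ E + (Real.log b - Real.log a) := by
    intro a b ha hab
    rw [G.f'_sub ha hab]
    refine (intervalIntegral.norm_integral_le_integral_norm hab).trans ?_
    have hinv : IntervalIntegrable (fun x : ℝ => x⁻¹) volume a b := by
      apply intervalIntegral.intervalIntegrable_inv
      · intro x hx
        rw [uIcc_of_le hab] at hx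
        exact (lt_of_lt_of_le ha hx.1).ne'
      · exact continuousOn_id
    have h1 : ∫ x in a..b, ‖G.f'' x‖ ≤ ∫ x in a..b, (G.dens x + x⁻¹) := by
      apply intervalIntegral.integral_mono_on hab (G.intervalIntegrable_f'' ha hab).norm
        ((G.intervalIntegrable_dens ha.le hab).add hinv)
      intro x hx
      have hx0 : 0 < x := lt_of_lt_of_le ha hx.1
      have h2 : 0 ≤ 1 / x * ‖G.f' x‖ ^ 2 := by positivity
      have h3 : 0 ≤ x * (‖G.f'' x‖ - x⁻¹) ^ 2 := by positivity
      have h4 : x * (‖G.f'' x‖ - x⁻¹) ^ 2 = x * ‖G.f'' x‖ ^ 2 - 2 * ‖G.f'' x‖ + x⁻¹ := by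
        field_simp
        ring
      have h5 := norm_nonneg (G.f'' x)
      unfold dens
      linarith
    rw [intervalIntegral.integral_add (G.intervalIntegrable_dens ha.le hab) hinv,
      integral_inv_of_pos ha (lt_of_lt_of_le ha hab),
      Real.log_div (lt_of_lt_of_le ha hab).ne' ha.ne'] at h1
    have h6 : ∫ x in a..b, G.dens x ≤ E := by
      rw [intervalIntegral.integral_of_le hab]
      apply setIntegral_mono_set G.dens_int
      · filter_upwards [ae_restrict_mem measurableSet_Ioi] with x hx using G.dens_nonneg hx
      · exact Eventually.of_forall (fun x hx => lt_trans ha hx.1)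
    linarith
  refine ⟨‖G.f' 1‖ + E, by positivity, fun x hx => ?_⟩
  rcases le_total x 1 with h | h
  · have h1 := key x 1 hx h
    have h2 := norm_sub_le (G.f' 1) (G.f' 1 - G.f' x)
    rw [sub_sub_cancel] at h2
    have := neg_le_abs (Real.log x)
    rw [Real.log_one] at h1
    linarith
  · have h1 := key 1 x one_pos h
    have h2 := norm_add_le (G.f' 1) (G.f' x - G.f' 1)
    rw [add_sub_cancel] at h2
    have := le_abs_self (Real.log x)
    rw [Real.log_one] at h1
    linarith

end Lambda0

open Topology in
lemma tendsto_left_aux (C A B : ℝ) :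
    Tendsto (fun x : ℝ => (C + |Real.log x|) * (x * (A + B * |Real.log x|))) (𝓝[>] 0) (𝓝 0) := by
  have h0 : Tendsto (fun x : ℝ => x) (𝓝[>] 0) (𝓝 0) := tendsto_nhdsWithin_of_tendsto_nhds tendsto_id
  have h1 : Tendsto (fun x : ℝ => |Real.log x| * x) (𝓝[>] 0) (𝓝 0) := by
    have := (tendsto_log_mul_rpow_nhdsGT_zero (r := 1) one_pos).abs
    rw [abs_zero] at this
    refine this.congr' ?_
    filter_upwards [self_mem_nhdsWithin] with x hx
    rw [Real.rpow_one, abs_mul, abs_of_pos (show 0 < x from hx)]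
  have h2 : Tendsto (fun x : ℝ => |Real.log x| * |Real.log x| * x) (𝓝[>] 0) (𝓝 0) := by
    have h := (tendsto_log_mul_rpow_nhdsGT_zero (r := 1 / 2) (by norm_num))
    have := h.mul h
    rw [zero_mul] at this
    refine this.congr' ?_
    filter_upwards [self_mem_nhdsWithin] with x hx
    have hx : 0 < x := hx
    have e : x ^ (1 / 2 : ℝ) * x ^ (1 / 2 : ℝ) = x := by
      rw [← Real.rpow_add hx]; norm_num
    rw [abs_mul_abs_self]
    calc _ = Real.log x * Real.log x * (x ^ (1 / 2 : ℝ) * x ^ (1 / 2 : ℝ)) := by ring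
      _ = _ := by rw [e]
  have h3 := ((h0.const_mul (C * A)).add (h1.const_mul (C * B + A))).add (h2.const_mul B)
  simp only [mul_zero, add_zero] at h3
  refine h3.congr (fun x => ?_)
  ring

open Topology in
lemma tendsto_right_aux (C D : ℝ) :
    Tendsto (fun x : ℝ => (C + |Real.log x|) * (D * x⁻¹)) atTop (𝓝 0) := by
  have h0 : Tendsto (fun x : ℝ => x⁻¹) atTop (𝓝 0) := tendsto_inv_atTop_zero
  have h1 : Tendsto (fun x : ℝ => |Real.log x| * x⁻¹) atTop (𝓝 0) := by
    have := (Real.isLittleO_log_id_atTop.tendsto_div_nhds_zero).abs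
    rw [abs_zero] at this
    refine this.congr' ?_
    filter_upwards [eventually_gt_atTop 0] with x hx
    rw [abs_div, id, abs_of_pos hx, div_eq_mul_inv]
  have h3 := (h0.const_mul (C * D)).add (h1.const_mul D)
  simp only [mul_zero, add_zero] at h3
  refine h3.congr (fun x => ?_)
  ring

open Topology in
lemma orth (n : ℕ) (hn : 2 ≤ n) (r : ℕ → ℝ) (hpos : 0 < r 1)
    (hmono : ∀ j, 1 ≤ j → j < n → r j < r (j + 1))
    (G S : Lambda0) (hS : IsBLSpline n r S.f)
    (hG : ∀ j, 1 ≤ j → j ≤ n → G.f (r j) = 0)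
    (hAB : ∃ a b c : ℂ, (∀ x ∈ Ioo 0 (r 1), S.f x = PP a b c 0 x) ∧
      Tendsto (fun x => (starRingEnd ℂ) b * G.f x) (𝓝[>] 0) (𝓝 0)) :
    ∫ x in Ioi (0:ℝ), G.cross S x = 0 := by
  have hrpos : ∀ k, 1 ≤ k → k ≤ n → 0 < r k := fun k h1 h2 =>
    lt_of_lt_of_le hpos (knots_le hmono k h1 h2)
  have hf'eq : EqOn S.f' (deriv S.f) (Ioi 0) := fun x hx => (S.hasDeriv x hx).deriv.symm
  have hcd1 : ContDiffOn ℝ 1 S.f' (Ioi 0) := by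
    have h2 : ContDiffOn ℝ (1 + 1) S.f (Ioi 0) := by
      have := hS.smooth
      norm_num
      exact this
    rw [contDiffOn_succ_iff_deriv_of_isOpen isOpen_Ioi] at h2
    exact h2.2.2.congr hf'eq
  set s2 : ℝ → ℂ := deriv S.f' with hs2def
  have hs2c : ContinuousOn s2 (Ioi 0) := hcd1.continuousOn_deriv_of_isOpen isOpen_Ioi le_rfl
  have hs2 : ∀ x, 0 < x → HasDerivAt S.f' (s2 x) x := fun x hx =>
    ((hcd1.differentiableOn (by norm_num)).differentiableAt (Ioi_mem_nhds hx)).hasDerivAt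
  set J : ℝ → ℂ := fun x => G.f' x * ((x : ℂ) * (starRingEnd ℂ) (s2 x)) with hJ
  obtain ⟨C, hC0, hC⟩ := G.f'_growth
  have hii : ∀ a b, 0 ≤ a → a ≤ b → IntervalIntegrable (G.cross S) volume a b := by
    intro a b ha hab
    rw [intervalIntegrable_iff_integrableOn_Ioc_of_le hab]
    exact (G.cross_int S).mono_set (fun x hx => lt_of_le_of_lt ha hx.1)
  have hmid : ∀ k, 1 ≤ k → k ≤ n → ∫ x in (r 1)..(r k), G.cross S x = J (r k) - J (r 1) := by
    intro k hk
    induction k, hk using Nat.le_induction with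
    | base => intro _; simp
    | succ k hk ih =>
      intro hkn
      have hk' : r k < r (k + 1) := hmono k hk (by omega)
      have hrk := hrpos k hk (by omega)
      obtain ⟨a, b, c, d, hp⟩ := hS.pieces k hk hkn
      have h1 := G.piece S hs2 hs2c hrk hk' hp
      rw [hG k hk (by omega), hG (k + 1) (by omega) hkn] at h1
      rw [← intervalIntegral.integral_add_adjacent_intervals
        (hii _ _ hpos.le (knots_le hmono k hk (by omega))) (hii _ _ hrk.le hk'.le),
        ih (by omega), h1]
      simp only [hJ]
      ring
  -- left part
  have hleft : ∫ x in (0:ℝ)..(r 1), G.cross S x = J (r 1) := by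
    obtain ⟨a, b, c, hL, hb⟩ := hAB
    have hcont : Tendsto (fun x => ∫ t in x..(r 1), G.cross S t) (𝓝[>] 0)
        (𝓝 (∫ t in (0:ℝ)..(r 1), G.cross S t)) := by
      have h1 : IntegrableOn (G.cross S) (uIcc 0 (r 1)) := by
        rw [uIcc_of_le hpos.le, integrableOn_Icc_iff_integrableOn_Ioc]
        exact (G.cross_int S).mono_set (fun x hx => hx.1)
      have h2 := intervalIntegral.continuousOn_primitive_interval_left h1 0 left_mem_uIcc
      rw [uIcc_of_le hpos.le] at h2
      exact h2.tendsto.mono_left (nhdsWithin_le_of_mem (Icc_mem_nhdsGT hpos))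
    have hJ0 : Tendsto J (𝓝[>] 0) (𝓝 0) := by
      apply squeeze_zero_norm' _ (tendsto_left_aux C (2 * ‖a‖ + 3 * ‖b‖) (2 * ‖b‖))
      filter_upwards [Ioo_mem_nhdsGT hpos] with x hx
      have hx0 : 0 < x := hx.1
      rw [hJ]
      simp only [norm_mul, RCLike.norm_conj, Complex.norm_real, Real.norm_eq_abs, abs_of_pos hx0]
      rw [S.s2_eq_PP2 hs2 le_rfl hL hx]
      have h2 : ‖PP2 a b 0 x‖ ≤ 2 * ‖a‖ + 3 * ‖b‖ + 2 * ‖b‖ * |Real.log x| := by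
        simp only [PP2, zero_div, sub_zero]
        refine (norm_add_le _ _).trans ?_
        rw [norm_mul, norm_mul]
        have h3 : ‖(2 * (Real.log x : ℂ) + 3)‖ ≤ 2 * |Real.log x| + 3 := by
          refine (norm_add_le _ _).trans ?_
          rw [norm_mul, Complex.norm_real]
          simp
        have h4 := mul_le_mul_of_nonneg_left h3 (norm_nonneg b)
        have h5 : ‖(2:ℂ)‖ = 2 := by simp
        rw [h5]
        linarith
      gcongr
      exact hC x hx0
    have hlim : Tendsto (fun x => ∫ t in x..(r 1), G.cross S t) (𝓝[>] 0) (𝓝 (J (r 1))) := by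
      have h1 : Tendsto (fun x => J (r 1) - J x + 4 * ((starRingEnd ℂ) b * G.f x)) (𝓝[>] 0)
          (𝓝 (J (r 1) - 0 + 4 * 0)) := (tendsto_const_nhds.sub hJ0).add (hb.const_mul 4)
      rw [mul_zero, sub_zero, add_zero] at h1
      refine h1.congr' ?_
      filter_upwards [Ioo_mem_nhdsGT hpos] with x hx
      rw [G.piece S hs2 hs2c hx.1 hx.2 (fun y hy => hL y ⟨lt_trans hx.1 hy.1, hy.2⟩),
        hG 1 le_rfl (by omega)]
      simp only [hJ]
      ring
    exact tendsto_nhds_unique hcont hlim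
  -- right part
  have hrn := hrpos n (by omega) le_rfl
  have hright : ∫ x in Ioi (r 1), G.cross S x = - J (r 1) := by
    have hint : IntegrableOn (G.cross S) (Ioi (r 1)) :=
      (G.cross_int S).mono_set (Ioi_subset_Ioi hpos.le)
    have hcont := intervalIntegral_tendsto_integral_Ioi (r 1) hint tendsto_id
    obtain ⟨c, d, hR⟩ := hS.right
    have hR' : ∀ x ∈ Ioi (r n), S.f x = PP 0 0 c d x := by
      intro x hx
      rw [hR x hx]; simp [PP]
    have hJ0 : Tendsto J atTop (𝓝 0) := by
      apply squeeze_zero_norm' _ (tendsto_right_aux C ‖d‖)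
      filter_upwards [eventually_gt_atTop (r n)] with x hx
      have hx0 : 0 < x := hrn.trans hx
      rw [hJ]
      simp only [norm_mul, RCLike.norm_conj, Complex.norm_real, Real.norm_eq_abs, abs_of_pos hx0]
      rw [S.s2_eq_PP2 hs2 hrn.le (β := x + 1) (fun y hy => hR' y hy.1) ⟨hx, by linarith⟩]
      have h2 : x * ‖PP2 0 0 d x‖ = ‖d‖ * x⁻¹ := by
        simp only [PP2, mul_zero, zero_mul, add_zero, zero_sub, norm_neg, norm_div, norm_pow,
          Complex.norm_real, Real.norm_eq_abs, abs_of_pos hx0]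
        field_simp
      rw [h2]
      gcongr
      exact hC x hx0
    have hlim : Tendsto (fun x => ∫ t in (r 1)..x, G.cross S t) atTop (𝓝 (0 - J (r 1))) := by
      refine (hJ0.sub_const (J (r 1))).congr' ?_
      filter_upwards [eventually_gt_atTop (r n)] with x hx
      rw [← intervalIntegral.integral_add_adjacent_intervals
        (hii _ _ hpos.le (knots_le hmono n (by omega) le_rfl)) (hii _ _ hrn.le hx.le),
        hmid n (by omega) le_rfl,
        G.piece S hs2 hs2c hrn hx (fun y hy => hR' y hy.1)]
      simp only [hJ, map_zero]
      ring
    rw [zero_sub] at hlim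
    exact tendsto_nhds_unique hcont hlim
  have hsplit := intervalIntegral.integral_interval_add_Ioi (G.cross_int S)
    ((G.cross_int S).mono_set (Ioi_subset_Ioi hpos.le))
  rw [← hsplit, hleft, hright]
  ring

/-- `L^p` error bound for `p ∈ [2,∞]`: for `l ∈ {0,1}`,
`‖f^{(l)} − σ^{(l)}‖_{L^p[r₁,r_n]} ≤ (1/(2^{1−l}·√r₁))·h^{3/2+1/p−l}·‖f‖₀`
(with the convention `1/∞ = 0`). -/
theorem stmt13 (n : ℕ) (hn : 2 ≤ n) (r : ℕ → ℝ) (hpos : 0 < r 1)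
    (hmono : ∀ j, 1 ≤ j → j < n → r j < r (j + 1))
    (h : ℝ) (hh : IsGreatest {d : ℝ | ∃ j, 1 ≤ j ∧ j < n ∧ d = r (j + 1) - r j} h)
    (F S : Lambda0) (hS : IsBLSpline n r S.f)
    (hint : ∀ j, 1 ≤ j → j ≤ n → S.f (r j) = F.f (r j))
    (hAB : Filter.Tendsto F.f (nhdsWithin 0 (Set.Ioi 0)) (nhds (S.f 0)) ∨
      NonSingularBLS (r 1) S.f)
    (p : ENNReal) (hp : 2 ≤ p) :
    MeasureTheory.eLpNorm (fun x => F.f x - S.f x) p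
        (MeasureTheory.volume.restrict (Set.Icc (r 1) (r n))) ≤
      ENNReal.ofReal
        (1 / (2 * Real.sqrt (r 1)) * h ^ ((3:ℝ)/2 + (1/p).toReal) * F.seminorm0) ∧
    MeasureTheory.eLpNorm (fun x => F.f' x - S.f' x) p
        (MeasureTheory.volume.restrict (Set.Icc (r 1) (r n))) ≤
      ENNReal.ofReal
        (1 / Real.sqrt (r 1) * h ^ ((1:ℝ)/2 + (1/p).toReal) * F.seminorm0) := by
  have hhj : ∀ j, 1 ≤ j → j < n → r (j + 1) - r j ≤ h := fun j h1 h2 => hh.2 ⟨j, h1, h2, rfl⟩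
  have hh0 : 0 < h :=
    lt_of_lt_of_le (sub_pos.2 (hmono 1 le_rfl (by omega))) (hhj 1 le_rfl (by omega))
  set G := F.sub S with hGdef
  have hG : ∀ j, 1 ≤ j → j ≤ n → G.f (r j) = 0 := by
    intro j h1 h2
    change F.f (r j) - S.f (r j) = 0
    rw [hint j h1 h2, sub_self]
  have hAB' : ∃ a b c : ℂ, (∀ x ∈ Ioo 0 (r 1), S.f x = PP a b c 0 x) ∧
      Tendsto (fun x => (starRingEnd ℂ) b * G.f x) (nhdsWithin 0 (Ioi 0)) (nhds 0) := by
    rcases hAB with hA | ⟨a, c, hB⟩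
    · obtain ⟨a, b, c, hL⟩ := hS.left
      refine ⟨a, b, c, fun x hx => by rw [hL x hx]; simp [PP], ?_⟩
      have h1 : Tendsto S.f (nhdsWithin 0 (Ioi 0)) (nhds (S.f 0)) :=
        hS.cont0.tendsto.mono_left (nhdsWithin_mono _ Ioi_subset_Ici_self)
      have h2 := (hA.sub h1).const_mul ((starRingEnd ℂ) b)
      rw [sub_self, mul_zero] at h2
      exact h2
    · refine ⟨a, 0, c, fun x hx => by rw [hB x hx]; simp [PP], ?_⟩
      simp
  have horth := orth n hn r hpos hmono G S hS hG hAB'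
  have hE := F.energy_le S horth
  set N := F.seminorm0 with hN
  have hN0 : 0 ≤ N := Real.sqrt_nonneg _
  have hE0 : 0 ≤ ∫ x in Ioi (0:ℝ), F.dens x :=
    setIntegral_nonneg measurableSet_Ioi (fun x hx => F.dens_nonneg hx)
  have hN2 : N ^ 2 = ∫ x in Ioi (0:ℝ), F.dens x := Real.sq_sqrt hE0
  rw [← hN2] at hE
  have hrpos : ∀ k, 1 ≤ k → k ≤ n → 0 < r k := fun k h1 h2 =>
    lt_of_lt_of_le hpos (knots_le hmono k h1 h2)
  have hBj : ∀ j, 1 ≤ j → j < n → (∫ t in (r j)..(r (j + 1)), ‖G.f'' t‖) ^ 2 ≤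
      h / r 1 * ∫ t in (r j)..(r (j + 1)), G.dens t := by
    intro j h1 h2
    have hj := hmono j h1 h2
    refine (G.B_sq_le hpos (knots_le hmono j h1 h2.le) hj).trans ?_
    apply mul_le_mul_of_nonneg_right
    · exact div_le_div_of_nonneg_right (hhj j h1 h2) hpos.le
    · exact intervalIntegral.integral_nonneg hj.le
        (fun x hx => G.dens_nonneg (lt_of_lt_of_le (hrpos j h1 h2.le) hx.1))
  have hsqrt : Real.sqrt (h / r 1) = 1 / Real.sqrt (r 1) * h ^ ((1:ℝ) / 2) := by
    rw [Real.sqrt_div hh0.le, Real.sqrt_eq_rpow h]; ring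
  constructor
  · have key := Lp_bound n hn r hpos hmono h hhj G.f G.dens G.dens_int
      (fun x hx => G.dens_nonneg hx) ((h / 2) ^ 2 * (h / r 1)) N (by positivity) hN0 hE (by
        intro j h1 h2 x hx
        have hj := hmono j h1 h2
        have h3 := G.f_le_B (hrpos j h1 h2.le) hj hx (hG j h1 h2.le) (hG (j + 1) (by omega) h2)
        have hB0 : 0 ≤ ∫ t in (r j)..(r (j + 1)), ‖G.f'' t‖ :=
          intervalIntegral.integral_nonneg hj.le (fun x _ => norm_nonneg _)
        have h4 : ‖G.f x‖ ≤ h / 2 * ∫ t in (r j)..(r (j + 1)), ‖G.f'' t‖ := by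
          refine h3.trans (mul_le_mul_of_nonneg_right ?_ hB0)
          linarith [hhj j h1 h2]
        calc ‖G.f x‖ ^ 2 ≤ (h / 2 * ∫ t in (r j)..(r (j + 1)), ‖G.f'' t‖) ^ 2 :=
              pow_le_pow_left₀ (norm_nonneg _) h4 2
          _ = (h / 2) ^ 2 * (∫ t in (r j)..(r (j + 1)), ‖G.f'' t‖) ^ 2 := by ring
          _ ≤ (h / 2) ^ 2 * (h / r 1 * ∫ t in (r j)..(r (j + 1)), G.dens t) :=
              mul_le_mul_of_nonneg_left (hBj j h1 h2) (by positivity)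
          _ = _ := by ring) p hp
    refine key.trans (le_of_eq ?_)
    congr 1
    rw [Real.sqrt_mul (by positivity), Real.sqrt_sq (by positivity), hsqrt,
      show (3:ℝ) / 2 + (1 / p).toReal = 1 + (1:ℝ) / 2 + (1 / p).toReal by ring,
      Real.rpow_add hh0, Real.rpow_add hh0, Real.rpow_one]
    ring
  · have key := Lp_bound n hn r hpos hmono h hhj G.f' G.dens G.dens_int
      (fun x hx => G.dens_nonneg hx) (h / r 1) N (by positivity) hN0 hE (by
        intro j h1 h2 x hx
        have hj := hmono j h1 h2
        have h3 := G.f'_le_B (hrpos j h1 h2.le) hj hx (hG j h1 h2.le) (hG (j + 1) (by omega) h2)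
        exact (pow_le_pow_left₀ (norm_nonneg _) h3 2).trans (hBj j h1 h2)) p hp
    refine key.trans (le_of_eq ?_)
    congr 1
    rw [hsqrt, Real.rpow_add hh0]
    ring
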